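/- Let {x^k} be generated by the multiobjective MFISTA algorithm. Let X* denote the set of weakly Pareto optimal points of F and let Ω := { x ∈ ℝ^n : F_i(x) ≤ F_i(x^0) for all i }. Assume X* is nonempty, assume that for every x ∈ Ω there exists x* ∈ X* with F_i(x*) ≤ F_i(x) for all i, and assume R := sup_{F* ∈ F(X* ∩ Ω)} inf_{x : F(x) = F*} ‖x − x^0‖² < ∞. Then for all k ≥ 1: u_0(x^k) ≤ 2ℓR/(k + 1)², where u_0(x) := sup_{z ∈ ℝ^n} min_{i=1,…,m} ( F_i(x) − F_i(z) ). -/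

import Mathlib

open scoped RealInnerProductSpace

noncomputable abbrev E (n : ℕ) := EuclideanSpace ℝ (Fin n)

/-!
The exact proximal step `z = d_ℓ(a, b)` satisfies a three-point inequality: strong convexity of its
objective at the minimizer, the descent lemma at `z` and the gradient inequality at `w` give, for
every `i` and `w`,
`F_i z - F_i a ≤ (ℓ/2) (‖w - b‖² - ‖z - w‖²) - σ(a, w)`, where `σ(a, w) = min_i (F_i a - F_i w)`.
Everything else follows from this inequality. With `w = a` it bounds `F_i (x^k)` by `F_i (x^0)`.
With `w` replaced by `(1 - 1/t_k) x^{k-1} + (1/t_k) w` and multiplied by `t_k²`, it telescopes,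
thanks to `t_{k+1}² - t_{k+1} = t_k²`, to
`t_k² σ(x^k, w) + (ℓ/2) ‖t_k z^k - (t_k - 1) x^{k-1} - w‖² ≤ (ℓ/2) ‖x^0 - w‖²`.
The telescoping is valid whatever the sign of `σ`. Since `t_k ≥ (k + 1)/2`, it remains to replace an
arbitrary `w` by a point with the same or better values close to `x^0`.
-/

open AffineMap Set

section NormedSpace

variable {V : Type*} [NormedAddCommGroup V] [NormedSpace ℝ V]

theorem add_apply_sub_le_of_convexOn_of_hasFDerivAt {s : Set V} {f : V → ℝ} {f' : V →L[ℝ] ℝ}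
    {a b : V} (hf : ConvexOn ℝ s f) (ha : a ∈ s) (hb : b ∈ s) (hf' : HasFDerivAt f f' a) :
    f a + f' (b - a) ≤ f b := by
  have hline : HasDerivAt (f ∘ lineMap a b) (f' (b - a)) (0 : ℝ) :=
    HasFDerivAt.comp_hasDerivAt 0 (by simpa using hf') hasDerivAt_lineMap
  have hslope := (hf.comp_affineMap (lineMap a b)).le_slope_of_hasDerivAt
    (by simpa using ha) (by simpa using hb) zero_lt_one hline
  simp only [slope_def_field, Function.comp_apply, lineMap_apply_one, lineMap_apply_zero] at hslope
  linarith

theorem le_add_fderiv_sub_add_sq_of_lipschitz {f : V → ℝ} {L : ℝ} (hf : Differentiable ℝ f)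
    (hL : ∀ a b, ‖fderiv ℝ f a - fderiv ℝ f b‖ ≤ L * ‖a - b‖) (a b : V) :
    f b ≤ f a + fderiv ℝ f a (b - a) + L / 2 * ‖b - a‖ ^ 2 := by
  have hline (s : ℝ) :
      HasDerivAt (f ∘ lineMap a b) (fderiv ℝ f (lineMap a b s) (b - a)) s :=
    (hf _).hasFDerivAt.comp_hasDerivAt s hasDerivAt_lineMap
  have hbound (s : ℝ) : HasDerivAt
      (fun s ↦ f a + s * fderiv ℝ f a (b - a) + s ^ 2 * (L / 2 * ‖b - a‖ ^ 2))
      (fderiv ℝ f a (b - a) + s * (L * ‖b - a‖ ^ 2)) s :=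
    ((((hasDerivAt_id s).mul_const (fderiv ℝ f a (b - a))).const_add (f a)).add
      ((hasDerivAt_pow 2 s).mul_const (L / 2 * ‖b - a‖ ^ 2))).congr_deriv (by push_cast; ring)
  have hderiv (s : ℝ) (hs : s ∈ Ico (0 : ℝ) 1) :
      fderiv ℝ f (lineMap a b s) (b - a) ≤ fderiv ℝ f a (b - a) + s * (L * ‖b - a‖ ^ 2) := by
    rw [← sub_le_iff_le_add', ← sub_apply]
    calc (fderiv ℝ f (lineMap a b s) - fderiv ℝ f a) (b - a)
      _ ≤ ‖fderiv ℝ f (lineMap a b s) - fderiv ℝ f a‖ * ‖b - a‖ :=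
        (Real.le_norm_self _).trans (ContinuousLinearMap.le_opNorm _ _)
      _ ≤ L * ‖lineMap a b s - a‖ * ‖b - a‖ := by gcongr; exact hL _ _
      _ = s * (L * ‖b - a‖ ^ 2) := by
        rw [lineMap_apply_module', add_sub_cancel_right, norm_smul, Real.norm_of_nonneg hs.1]
        ring
  simpa using image_le_of_deriv_right_le_deriv_boundary
    (fun s _ ↦ (hline s).continuousAt.continuousWithinAt)
    (fun s _ ↦ (hline s).hasDerivWithinAt) (by simp)
    (fun s _ ↦ (hbound s).continuousAt.continuousWithinAt)
    (fun s _ ↦ (hbound s).hasDerivWithinAt) hderiv (right_mem_Icc.2 zero_le_one)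

theorem convexOn_ciSup {ι : Type*} [Nonempty ι] {s : Set V} {f : ι → V → ℝ}
    (hf : ∀ i, ConvexOn ℝ s (f i)) (hbdd : ∀ a ∈ s, BddAbove (range fun i ↦ f i a)) :
    ConvexOn ℝ s fun a ↦ ⨆ i, f i a := by
  refine ⟨(hf (Classical.arbitrary ι)).1, fun a ha b hb p q hp hq hpq ↦ ciSup_le fun i ↦ ?_⟩
  refine ((hf i).2 ha hb hp hq hpq).trans ?_
  gcongr
  exacts [le_ciSup (hbdd a ha) i, le_ciSup (hbdd b hb) i]

theorem add_sq_norm_sub_le_of_strongConvexOn_of_isMinOn {s : Set V} {φ : V → ℝ} {m : ℝ} {a b : V}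
    (hφ : StrongConvexOn s m φ) (hmin : IsMinOn φ s a) (ha : a ∈ s) (hb : b ∈ s) :
    φ a + m / 2 * ‖a - b‖ ^ 2 ≤ φ b := by
  have hsegment : ∀ᶠ r : ℝ in nhdsWithin 0 (Ioi 0),
      φ a + (1 - r) * (m / 2 * ‖a - b‖ ^ 2) ≤ φ b := by
    filter_upwards [Ioo_mem_nhdsGT (zero_lt_one (α := ℝ))] with r ⟨hr0, hr1⟩
    have hr1' : 0 ≤ 1 - r := sub_nonneg.2 hr1.le
    have hle : φ a ≤ φ ((1 - r) • a + r • b) :=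
      hmin (hφ.1 ha hb hr1' hr0.le (by ring))
    have hconv := hφ.2 ha hb hr1' hr0.le (by ring)
    simp only [smul_eq_mul] at hconv
    exact le_of_mul_le_mul_left (by linarith) hr0
  refine le_of_tendsto (Filter.Tendsto.mono_left ?_ nhdsWithin_le_nhds) hsegment
  have hcont : Continuous fun r : ℝ ↦ φ a + (1 - r) * (m / 2 * ‖a - b‖ ^ 2) := by fun_prop
  simpa using hcont.tendsto 0

end NormedSpace

theorem strongConvexOn_add_sq_norm_sub {H : Type*} [NormedAddCommGroup H] [InnerProductSpace ℝ H]
    {s : Set H} {h : H → ℝ} (hh : ConvexOn ℝ s h) (m : ℝ) (b : H) :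
    StrongConvexOn s m fun w ↦ h w + m / 2 * ‖w - b‖ ^ 2 := by
  rw [strongConvexOn_iff_convex]
  refine ((hh.add ((innerₛₗ ℝ (-(m • b))).convexOn hh.1)).add_const
    (m / 2 * ‖b‖ ^ 2)).congr fun w _ ↦ ?_
  simp only [Pi.add_apply, innerₛₗ_apply_apply, inner_neg_left, real_inner_smul_left,
    norm_sub_sq_real, real_inner_comm w b]
  ring

section Merit

variable {ι V : Type*} {F : ι → V → ℝ} {p a w w' : V}

/-- The worst-case gain `min_i (F_i p - F_i w)` of moving from `p` to `w`, of which the merit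
function `u_0` is the supremum over `w`. -/
noncomputable def meritGap (F : ι → V → ℝ) (p w : V) : ℝ := ⨅ i, (F i p - F i w)

/-- The merit function `u_0`, with values in `EReal` because the supremum may be infinite. -/
noncomputable def meritFunction (F : ι → V → ℝ) (p : V) : EReal := ⨆ w, (meritGap F p w : EReal)

theorem meritGap_le [Finite ι] (F : ι → V → ℝ) (p w : V) (i : ι) :
    meritGap F p w ≤ F i p - F i w :=
  ciInf_le (finite_range _).bddBelow i

variable [Nonempty ι]

theorem meritGap_self (F : ι → V → ℝ) (p : V) : meritGap F p p = 0 := by simp [meritGap]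

theorem meritGap_le_meritGap_add [Finite ι] {c : ℝ} (h : ∀ i, F i p ≤ F i a + c) (w : V) :
    meritGap F p w ≤ meritGap F a w + c := by
  refine sub_le_iff_le_add.1 (le_ciInf fun i ↦ ?_)
  linarith [meritGap_le F p w i, h i]

theorem meritGap_anti_right [Finite ι] (p : V) (h : ∀ i, F i w' ≤ F i w) :
    meritGap F p w ≤ meritGap F p w' :=
  le_ciInf fun i ↦ (meritGap_le F p w i).trans (sub_le_sub_left (h i) _)

theorem mul_meritGap_le_meritGap_lineMap [Finite ι] [AddCommGroup V] [Module ℝ V]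
    (hF : ∀ i, ConvexOn ℝ univ (F i)) {s : ℝ} (hs : s ∈ Icc (0 : ℝ) 1) (a w : V) :
    s * meritGap F a w ≤ meritGap F a (lineMap a w s) := by
  refine le_ciInf fun i ↦ ?_
  have hconv := (hF i).2 (mem_univ a) (mem_univ w) (sub_nonneg.2 hs.2) hs.1 (by ring)
  have hgap := mul_le_mul_of_nonneg_left (meritGap_le F a w i) hs.1
  rw [lineMap_apply_module]
  simp only [smul_eq_mul] at hconv
  linarith

end Merit

/-- The three-point inequality satisfied by the proximal step `z = d_ℓ(a, b)`; it is all that the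
convergence analysis uses about `z`. -/
def IsThreePointStep {ι V : Type*} [NormedAddCommGroup V] (F : ι → V → ℝ) (ℓ : ℝ) (a b z : V) :
    Prop :=
  ∀ i w, F i z - F i a ≤ ℓ / 2 * (‖w - b‖ ^ 2 - ‖z - w‖ ^ 2) - meritGap F a w

section ProximalStep

variable {ι H : Type*} [NormedAddCommGroup H] [InnerProductSpace ℝ H] [CompleteSpace H]
  {f g : ι → H → ℝ} {ℓ : ℝ}

/-- The maximum over `i` of the increments from `F_i a`, where `F = f + g` and `f` is linearized
at `b`: the function `φ_{a,b,ℓ}` without its quadratic term. -/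
noncomputable def proxModel (f g : ι → H → ℝ) (a b w : H) : ℝ :=
  ⨆ i, (⟪gradient (f i) b, w - b⟫ + g i w + f i b - (f + g) i a)

theorem convexOn_proxModel [Finite ι] [Nonempty ι] (hg : ∀ i, ConvexOn ℝ univ (g i)) (a b : H) :
    ConvexOn ℝ univ (proxModel f g a b) := by
  refine convexOn_ciSup (fun i ↦ ?_) fun w _ ↦ (finite_range _).bddAbove
  refine ((((innerₛₗ ℝ (gradient (f i) b)).convexOn convex_univ).add (hg i)).add_const
    (f i b - (f + g) i a - ⟪gradient (f i) b, b⟫)).congr fun w _ ↦ ?_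
  simp only [Pi.add_apply, innerₛₗ_apply_apply, inner_sub_right]
  ring

theorem proxModel_le_neg_meritGap [Finite ι] [Nonempty ι] (hf : ∀ i, ConvexOn ℝ univ (f i))
    (hfd : ∀ i, Differentiable ℝ (f i)) (a b w : H) :
    proxModel f g a b w ≤ -meritGap (f + g) a w := by
  refine ciSup_le fun i ↦ ?_
  have hgrad := add_apply_sub_le_of_convexOn_of_hasFDerivAt (hf i) (mem_univ b) (mem_univ w)
    (hfd i b).hasFDerivAt
  have hgap := meritGap_le (f + g) a w i
  rw [inner_gradient_left]
  simp only [Pi.add_apply] at hgap ⊢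
  linarith

theorem sub_le_proxModel_add_sq [Finite ι] (hfd : ∀ i, Differentiable ℝ (f i))
    (hfl : ∀ i a b, ‖gradient (f i) a - gradient (f i) b‖ ≤ ℓ * ‖a - b‖) (a b w : H) (i : ι) :
    (f + g) i w - (f + g) i a ≤ proxModel f g a b w + ℓ / 2 * ‖w - b‖ ^ 2 := by
  have hlip (u v : H) : ‖fderiv ℝ (f i) u - fderiv ℝ (f i) v‖ ≤ ℓ * ‖u - v‖ := by
    rw [← toDual_gradient, ← toDual_gradient, ← map_sub, LinearIsometryEquiv.norm_map]
    exact hfl i u v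
  have hdescent := le_add_fderiv_sub_add_sq_of_lipschitz (hfd i) hlip b w
  have hmodel : ⟪gradient (f i) b, w - b⟫ + g i w + f i b - (f + g) i a ≤ proxModel f g a b w :=
    le_ciSup (f := fun i ↦ ⟪gradient (f i) b, w - b⟫ + g i w + f i b - (f + g) i a)
      (finite_range _).bddAbove i
  rw [inner_gradient_left] at hmodel
  simp only [Pi.add_apply] at hmodel ⊢
  linarith

theorem isThreePointStep_of_isMinOn [Finite ι] [Nonempty ι] (hf : ∀ i, ConvexOn ℝ univ (f i))
    (hfd : ∀ i, Differentiable ℝ (f i))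
    (hfl : ∀ i a b, ‖gradient (f i) a - gradient (f i) b‖ ≤ ℓ * ‖a - b‖)
    (hg : ∀ i, ConvexOn ℝ univ (g i)) {a b z : H}
    (hz : IsMinOn (fun w ↦ proxModel f g a b w + ℓ / 2 * ‖w - b‖ ^ 2) univ z) :
    IsThreePointStep (f + g) ℓ a b z := by
  intro i w
  have hstrong := add_sq_norm_sub_le_of_strongConvexOn_of_isMinOn
    (strongConvexOn_add_sq_norm_sub (convexOn_proxModel hg a b) ℓ b) hz (mem_univ z) (mem_univ w)
  have hupper := sub_le_proxModel_add_sq (g := g) hfd hfl a b z i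
  have hlower := proxModel_le_neg_meritGap (g := g) hf hfd a b w
  linarith

end ProximalStep

/-- The FISTA step-size parameters, indexed from `1`; `t 0` is irrelevant. -/
structure IsFISTAParameter (t : ℕ → ℝ) : Prop where
  one : t 1 = 1
  add_two (k : ℕ) : t (k + 2) = (1 + √(1 + 4 * t (k + 1) ^ 2)) / 2

namespace IsFISTAParameter

variable {t : ℕ → ℝ}

theorem sq_sub_self (ht : IsFISTAParameter t) (k : ℕ) :
    t (k + 2) ^ 2 - t (k + 2) = t (k + 1) ^ 2 := by
  have hsqrt := Real.sq_sqrt (show 0 ≤ 1 + 4 * t (k + 1) ^ 2 by positivity)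
  rw [ht.add_two]
  linarith

theorem add_half_le (ht : IsFISTAParameter t) (k : ℕ) : t (k + 1) + 1 / 2 ≤ t (k + 2) := by
  have hsqrt : 2 * t (k + 1) ≤ √(1 + 4 * t (k + 1) ^ 2) :=
    Real.le_sqrt_of_sq_le (by linarith)
  rw [ht.add_two]
  linarith

theorem half_le (ht : IsFISTAParameter t) (k : ℕ) : ((k : ℝ) + 2) / 2 ≤ t (k + 1) := by
  induction k with
  | zero => simp [ht.one]
  | succ k ih =>
    have hstep := ht.add_half_le k
    push_cast
    linarith

theorem one_le (ht : IsFISTAParameter t) (k : ℕ) : 1 ≤ t (k + 1) := by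
  linarith [ht.half_le k, Nat.cast_nonneg (α := ℝ) k]

end IsFISTAParameter

section Acceleration

variable {ι V : Type*} [NormedAddCommGroup V] [NormedSpace ℝ V] {F : ι → V → ℝ} {ℓ : ℝ}

theorem IsThreePointStep.sq_mul_meritGap_add_le [Finite ι] [Nonempty ι] {a b z p : V}
    (hz : IsThreePointStep F ℓ a b z) (hF : ∀ i, ConvexOn ℝ univ (F i)) (hp : ∀ i, F i p ≤ F i z)
    {T : ℝ} (hT : 1 ≤ T) (w : V) :
    T ^ 2 * meritGap F p w + ℓ / 2 * ‖T • z - (T - 1) • a - w‖ ^ 2 ≤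
      (T ^ 2 - T) * meritGap F a w + ℓ / 2 * ‖T • b - (T - 1) • a - w‖ ^ 2 := by
  have hT0 : 0 < T := zero_lt_one.trans_le hT
  set v := lineMap a w T⁻¹ with hv
  have hscale (u : V) : ‖T • u - (T - 1) • a - w‖ ^ 2 = T ^ 2 * ‖u - v‖ ^ 2 := by
    have hTv : T • v = (T - 1) • a + w := by
      rw [hv, lineMap_apply_module', smul_add, smul_inv_smul₀ hT0.ne']
      module
    rw [sub_sub, ← hTv, ← smul_sub, norm_smul, mul_pow, Real.norm_of_nonneg hT0.le]
  have hgap : T⁻¹ * meritGap F a w ≤ meritGap F a v :=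
    mul_meritGap_le_meritGap_lineMap hF ⟨inv_nonneg.2 hT0.le, inv_le_one_of_one_le₀ hT⟩ a w
  have hdecrease : meritGap F p w ≤
      meritGap F a w + (ℓ / 2 * (‖b - v‖ ^ 2 - ‖z - v‖ ^ 2) - T⁻¹ * meritGap F a w) := by
    refine meritGap_le_meritGap_add (fun i ↦ ?_) w
    rw [norm_sub_rev b v]
    linarith [hz i v, hp i]
  have hscaled := mul_le_mul_of_nonneg_left hdecrease (sq_nonneg T)
  have hinv : T ^ 2 * (T⁻¹ * meritGap F a w) = T * meritGap F a w := by field_simp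
  rw [hscale, hscale]
  linarith

/-- The iterates of MFISTA, with indices as in the paper (so `y`, `z` and `t` start at `1`), for
steps `z` that satisfy the three-point inequality, in particular for exact proximal steps
(`isThreePointStep_of_isMinOn`). -/
structure IsMFISTA (F : ι → V → ℝ) (ℓ : ℝ) (x y z : ℕ → V) (t : ℕ → ℝ) : Prop where
  parameter : IsFISTAParameter t
  y_one : y 1 = x 0
  step (k : ℕ) : IsThreePointStep F ℓ (x k) (y (k + 1)) (z (k + 1))
  accept (k : ℕ) : 0 ≤ (⨆ i, (F i (x k) - F i (z (k + 1)))) → x (k + 1) = z (k + 1)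
  reject (k : ℕ) : ¬ 0 ≤ (⨆ i, (F i (x k) - F i (z (k + 1)))) → x (k + 1) = x k
  y_add_two (k : ℕ) : y (k + 2) = x (k + 1) + (t (k + 1) / t (k + 2)) • (z (k + 1) - x (k + 1)) +
    ((t (k + 1) - 1) / t (k + 2)) • (x (k + 1) - x k)

namespace IsMFISTA

variable {x y z : ℕ → V} {t : ℕ → ℝ}

theorem succ_eq_or (h : IsMFISTA F ℓ x y z t) (k : ℕ) : x (k + 1) = z (k + 1) ∨ x (k + 1) = x k :=
  (em _).imp (h.accept k) (h.reject k)

theorem apply_succ_le [Finite ι] (h : IsMFISTA F ℓ x y z t) (k : ℕ) (i : ι) :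
    F i (x (k + 1)) ≤ F i (z (k + 1)) := by
  by_cases hacc : 0 ≤ ⨆ i, (F i (x k) - F i (z (k + 1)))
  · rw [h.accept k hacc]
  · have hle : F i (x k) - F i (z (k + 1)) ≤ ⨆ i, (F i (x k) - F i (z (k + 1))) :=
      le_ciSup (f := fun i ↦ F i (x k) - F i (z (k + 1))) (finite_range _).bddAbove i
    rw [h.reject k hacc]
    linarith

theorem norm_iterate_sub_extrapolation_le (h : IsMFISTA F ℓ x y z t) (k : ℕ) :
    ‖x (k + 1) - y (k + 2)‖ ≤ ‖z (k + 1) - x k‖ := by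
  have ht1 := h.parameter.one_le k
  have ht2 := h.parameter.add_half_le k
  obtain ⟨c, ⟨hc0, hc1⟩, hc⟩ : ∃ c ∈ Icc (0 : ℝ) 1,
      y (k + 2) - x (k + 1) = c • (z (k + 1) - x k) := by
    rw [h.y_add_two]
    rcases h.succ_eq_or k with hx | hx <;> rw [hx]
    · refine ⟨(t (k + 1) - 1) / t (k + 2), ⟨div_nonneg ?_ ?_, div_le_one_of_le₀ ?_ ?_⟩, by module⟩
        <;> linarith
    · refine ⟨t (k + 1) / t (k + 2), ⟨div_nonneg ?_ ?_, div_le_one_of_le₀ ?_ ?_⟩, by module⟩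
        <;> linarith
  rw [norm_sub_rev, hc, norm_smul, Real.norm_of_nonneg hc0]
  exact mul_le_of_le_one_left (norm_nonneg _) hc1

theorem apply_succ_add_sq_le [Finite ι] [Nonempty ι] (h : IsMFISTA F ℓ x y z t) (hℓ : 0 ≤ ℓ)
    (k : ℕ) (i : ι) :
    F i (x (k + 1)) + ℓ / 2 * ‖z (k + 1) - x k‖ ^ 2 ≤ F i (x 0) := by
  have hdecrease (k : ℕ) : F i (x (k + 1)) + ℓ / 2 * ‖z (k + 1) - x k‖ ^ 2 ≤
      F i (x k) + ℓ / 2 * ‖x k - y (k + 1)‖ ^ 2 := by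
    linarith [h.step k i (x k), h.apply_succ_le k i, meritGap_self F (x k)]
  induction k with
  | zero => simpa [h.y_one] using hdecrease 0
  | succ k ih =>
    have hnorm : ℓ / 2 * ‖x (k + 1) - y (k + 2)‖ ^ 2 ≤ ℓ / 2 * ‖z (k + 1) - x k‖ ^ 2 := by
      gcongr
      exact h.norm_iterate_sub_extrapolation_le k
    linarith [hdecrease (k + 1)]

theorem smul_y_sub_eq_smul_z_sub (h : IsMFISTA F ℓ x y z t) (k : ℕ) :
    t (k + 2) • y (k + 2) - (t (k + 2) - 1) • x (k + 1) =
      t (k + 1) • z (k + 1) - (t (k + 1) - 1) • x k := by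
  have ht : t (k + 2) ≠ 0 := (zero_lt_one.trans_le (h.parameter.one_le (k + 1))).ne'
  rw [h.y_add_two, smul_add, smul_add, smul_smul, smul_smul, mul_div_cancel₀ _ ht,
    mul_div_cancel₀ _ ht]
  module

theorem sq_mul_meritGap_add_le [Finite ι] [Nonempty ι] (h : IsMFISTA F ℓ x y z t)
    (hF : ∀ i, ConvexOn ℝ univ (F i)) (k : ℕ) (w : V) :
    t (k + 1) ^ 2 * meritGap F (x (k + 1)) w +
      ℓ / 2 * ‖t (k + 1) • z (k + 1) - (t (k + 1) - 1) • x k - w‖ ^ 2 ≤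
      ℓ / 2 * ‖x 0 - w‖ ^ 2 := by
  have hstep (k : ℕ) := (h.step k).sq_mul_meritGap_add_le hF (h.apply_succ_le k)
    (h.parameter.one_le k) w
  induction k with
  | zero => simpa [h.y_one, h.parameter.one] using hstep 0
  | succ k ih =>
    have hnext := hstep (k + 1)
    rw [h.smul_y_sub_eq_smul_z_sub, h.parameter.sq_sub_self] at hnext
    exact hnext.trans ih

theorem meritGap_le [Finite ι] [Nonempty ι] (h : IsMFISTA F ℓ x y z t)
    (hF : ∀ i, ConvexOn ℝ univ (F i)) (hℓ : 0 ≤ ℓ) (k : ℕ) (w : V) :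
    meritGap F (x (k + 1)) w ≤ 2 * ℓ / ((k : ℝ) + 2) ^ 2 * ‖w - x 0‖ ^ 2 := by
  rcases le_total (meritGap F (x (k + 1)) w) 0 with hneg | hpos
  · exact hneg.trans (by positivity)
  · have hgrowth : (((k : ℝ) + 2) / 2) ^ 2 * meritGap F (x (k + 1)) w ≤
        t (k + 1) ^ 2 * meritGap F (x (k + 1)) w := by
      gcongr
      exact h.parameter.half_le k
    have henergy : t (k + 1) ^ 2 * meritGap F (x (k + 1)) w ≤ ℓ / 2 * ‖w - x 0‖ ^ 2 := by
      rw [norm_sub_rev]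
      exact le_of_add_le_of_nonneg_left (h.sq_mul_meritGap_add_le hF k w) (by positivity)
    rw [div_mul_eq_mul_div, le_div_iff₀ (by positivity)]
    linarith

end IsMFISTA

end Acceleration

section LevelSet

variable {ι V : Type*} [NormedAddCommGroup V] {F : ι → V → ℝ} {a p : V}

/-- The squared distance `inf_{w : F(w) = F(a)} ‖w - p‖²` from `p` to the level set of `F` through
`a`. -/
noncomputable def sqDistLevelSet (F : ι → V → ℝ) (a p : V) : ℝ :=
  sInf {s | ∃ w, (∀ i, F i w = F i a) ∧ s = ‖w - p‖ ^ 2}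

theorem sqDistLevelSet_nonneg : 0 ≤ sqDistLevelSet F a p :=
  Real.sInf_nonneg fun _ ⟨_, _, hs⟩ ↦ hs ▸ sq_nonneg _

theorem le_mul_sqDistLevelSet {c C : ℝ} (hC : 0 ≤ C)
    (h : ∀ w, (∀ i, F i w = F i a) → c ≤ C * ‖w - p‖ ^ 2) : c ≤ C * sqDistLevelSet F a p := by
  rw [sqDistLevelSet, ← smul_eq_mul, ← Real.sInf_smul_of_nonneg hC]
  refine le_csInf (Nonempty.smul_set ⟨_, a, fun _ ↦ rfl, rfl⟩) ?_
  rintro _ ⟨_, ⟨w, hw, rfl⟩, rfl⟩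
  exact h w hw

end LevelSet

theorem stmt_16_general {ι V : Type*} [Finite ι] [Nonempty ι] [NormedAddCommGroup V]
    [NormedSpace ℝ V] {F : ι → V → ℝ} {ℓ R : ℝ} {x y z : ℕ → V} {t : ℕ → ℝ}
    (hF : ∀ i, ConvexOn ℝ univ (F i)) (hℓ : 0 ≤ ℓ) (h : IsMFISTA F ℓ x y z t)
    (hR : ∀ v, (∀ i, F i v ≤ F i (x 0)) →
      ∃ a, (∀ i, F i a ≤ F i v) ∧ sqDistLevelSet F a (x 0) ≤ R) (k : ℕ) (hk : 1 ≤ k) :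
    meritFunction F (x k) ≤ ((2 * ℓ * R / ((k : ℝ) + 1) ^ 2 : ℝ) : EReal) := by
  obtain ⟨k, rfl⟩ := Nat.exists_eq_add_of_le' hk
  refine iSup_le fun v ↦ EReal.coe_le_coe_iff.2 ?_
  set C := 2 * ℓ / ((k : ℝ) + 2) ^ 2 with hC
  have hC0 : 0 ≤ C := by positivity
  have hCR : 2 * ℓ * R / (((k + 1 : ℕ) : ℝ) + 1) ^ 2 = C * R := by
    rw [hC]
    push_cast
    ring
  rw [hCR]
  by_cases hv : ∀ i, F i v ≤ F i (x 0)
  · obtain ⟨a, hav, haR⟩ := hR v hv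
    refine le_trans ?_ (mul_le_mul_of_nonneg_left haR hC0)
    refine le_mul_sqDistLevelSet hC0 fun w hw ↦ ?_
    exact (meritGap_anti_right _ fun i ↦ (hw i).trans_le (hav i)).trans (h.meritGap_le hF hℓ k w)
  · obtain ⟨i, hi⟩ := not_forall.1 hv
    obtain ⟨a, -, haR⟩ := hR (x 0) fun _ ↦ le_rfl
    have hvalue : F i (x (k + 1)) ≤ F i (x 0) :=
      le_of_add_le_of_nonneg_left (h.apply_succ_add_sq_le hℓ k i) (by positivity)
    calc meritGap F (x (k + 1)) v
      _ ≤ F i (x (k + 1)) - F i v := meritGap_le F _ v i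
      _ ≤ 0 := by linarith
      _ ≤ C * R := mul_nonneg hC0 (sqDistLevelSet_nonneg.trans haR)

theorem stmt_16
    (n m : ℕ) (hn : 1 ≤ n) (hm : 1 ≤ m)
    (f g F : Fin m → E n → ℝ)
    (L : Fin m → ℝ) (hL : ∀ i, 0 < L i)
    (hfc : ∀ i, ConvexOn ℝ Set.univ (f i))
    (hfd : ∀ i, ContDiff ℝ 1 (f i))
    (hflip : ∀ i a b, ‖gradient (f i) a - gradient (f i) b‖ ≤ L i * ‖a - b‖)
    (hgc : ∀ i, ConvexOn ℝ Set.univ (g i))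
    (hF : ∀ i w, F i w = f i w + g i w)
    (ℓ : ℝ) (hℓ : 0 < ℓ) (hℓL : ∀ i, L i ≤ ℓ)
    (d : E n → E n → E n)
    (hd : ∀ a b w,
      (⨆ i, (⟪gradient (f i) b, d a b - b⟫ + g i (d a b) + f i b - F i a)) +
          ℓ / 2 * ‖d a b - b‖ ^ 2 ≤
        (⨆ i, (⟪gradient (f i) b, w - b⟫ + g i w + f i b - F i a)) +
          ℓ / 2 * ‖w - b‖ ^ 2)
    (x y z : ℕ → E n) (t : ℕ → ℝ)
    (hy1 : y 1 = x 0) (ht1 : t 1 = 1)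
    (ht : ∀ k, 1 ≤ k → t (k + 1) = (1 + Real.sqrt (1 + 4 * t k ^ 2)) / 2)
    (hz : ∀ k, 1 ≤ k → z k = d (x (k - 1)) (y k))
    (hxpos : ∀ k, 1 ≤ k → 0 ≤ (⨆ i, (F i (x (k - 1)) - F i (z k))) → x k = z k)
    (hxneg : ∀ k, 1 ≤ k → ¬ 0 ≤ (⨆ i, (F i (x (k - 1)) - F i (z k))) → x k = x (k - 1))
    (hy : ∀ k, 1 ≤ k →
      y (k + 1) = x k + (t k / t (k + 1)) • (z k - x k) +
        ((t k - 1) / t (k + 1)) • (x k - x (k - 1)))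
    (Xstar : Set (E n)) (hX : Xstar = {a | ¬ ∃ w : E n, ∀ i, F i w < F i a})
    (Ω : Set (E n)) (hΩ : Ω = {w | ∀ i, F i w ≤ F i (x 0)})
    (hne : Xstar.Nonempty)
    (hdom : ∀ w ∈ Ω, ∃ a ∈ Xstar, ∀ i, F i a ≤ F i w)
    (A : Set ℝ)
    (hA : A = {r | ∃ a ∈ Xstar ∩ Ω,
      r = sInf {s | ∃ w : E n, (∀ i, F i w = F i a) ∧ s = ‖w - x 0‖ ^ 2}})
    (hbdd : BddAbove A)
    (R : ℝ) (hR : R = sSup A) :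
    ∀ k, 1 ≤ k →
      (⨆ v : E n, (((⨅ i, (F i (x k) - F i v)) : ℝ) : EReal)) ≤
        ((2 * ℓ * R / ((k : ℝ) + 1) ^ 2 : ℝ) : EReal) := by
  have : Nonempty (Fin m) := ⟨⟨0, hm⟩⟩
  obtain rfl : F = f + g := funext fun i ↦ funext (hF i)
  subst hX hΩ hA hR
  have hd_step (a b : E n) : IsThreePointStep (f + g) ℓ a b (d a b) :=
    isThreePointStep_of_isMinOn hfc (fun i ↦ (hfd i).differentiable one_ne_zero)
      (fun i a b ↦ (hflip i a b).trans (by gcongr; exact hℓL i)) hgc fun w _ ↦ hd a b w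
  have hmfista : IsMFISTA (f + g) ℓ x y z t :=
    { parameter := ⟨ht1, fun k ↦ ht (k + 1) k.succ_pos⟩
      y_one := hy1
      step := fun k ↦ hz (k + 1) k.succ_pos ▸ hd_step (x k) (y (k + 1))
      accept := fun k ↦ hxpos (k + 1) k.succ_pos
      reject := fun k ↦ hxneg (k + 1) k.succ_pos
      y_add_two := fun k ↦ hy (k + 1) k.succ_pos }
  refine stmt_16_general (fun i ↦ (hfc i).add (hgc i)) hℓ.le hmfista fun v hv ↦ ?_
  obtain ⟨a, ha, hav⟩ := hdom v hv
  exact ⟨a, hav, le_csSup hbdd ⟨a, ⟨ha, fun i ↦ (hav i).trans (hv i)⟩, rfl⟩⟩
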